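/- Define q : ℝ¹⁰ → ℝ⁵ by q(x) = (2x₁x₂ − x₇² − x₈² + x₉² + x₁₀², √2x₅x₇ − √2x₅x₉ + √2x₆x₈ − √2x₆x₁₀ − 2x₂x₄, −√2x₅x₈ − √2x₅x₁₀ + √2x₆x₇ + √2x₆x₉ + 2x₂x₃, −√2x₃x₇ + √2x₃x₉ + √2x₄x₈ + √2x₄x₁₀ − 2x₁x₆, −√2x₃x₈ + √2x₃x₁₀ − √2x₄x₇ − √2x₄x₉ + 2x₁x₅), F(x) = 2|q(x)|² − |x|⁴, and the complex-valued functions on ℝ¹⁰: ζ(x) = x₉ + i x₁₀; κ(x) = √2x₅x₇ − √2x₅x₉ + √2x₆x₈ − √2x₆x₁₀ − 2x₂x₄ + i(−√2x₅x₈ − √2x₅x₁₀ + √2x₆x₇ + √2x₆x₉ + 2x₂x₃); σ(x) = −x₃² + x₄² − 2x₇x₉ − 2x₈x₁₀ + i(−2x₃x₄ − 2x₇x₁₀ + 2x₈x₉); ν(x) = (1/4)(∂F/∂x₉ + i ∂F/∂x₁₀)(x); ρ(x) = (1/4)(x₉ + i x₁₀)(∂F/∂x₃ + i ∂F/∂x₄)(x)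 − (1/4)(∂F/∂x₉ + i ∂F/∂x₁₀)(x)(x₃ + i x₄). Then at the point p_t = (0, 0, 2^{−1/4} cos t, 0, −2^{−1/4} sin t, 0, (1/2)√(4 − 2√2), 0, 0, 0), for every t ∈ ℝ: ζ(p_t) = 0, κ(p_t) = −2^{−3/4} √(4 − 2√2) · sin t, ν(p_t) = −2^{−1/2} √(4 − 2√2), ρ(p_t) = 2^{−3/4} √(4 − 2√2) · cos t, and σ(p_t) = −2^{−1/2} cos² t. -/

import Mathlib

/-!
On the three-dimensional slice `(0, 0, a, 0, b, 0, c, 0, 0, 0)`, which contains the curve `p_t`,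
all the functions simplify. Restricted to a line through such a point in the direction of `x₉` or
`x₁₀`, `F` is an explicit one-variable polynomial (`FCM_line_eight`, `FCM_line_nine`), whence
`∂F/∂x₉ = -8 c (a² + b²)` and `∂F/∂x₁₀ = 0`. As `x₉ = x₁₀ = 0`, the derivatives `∂F/∂x₃` and
`∂F/∂x₄` do not contribute to `ρ`. What remains is the arithmetic of the powers of `2`, together
with `cos² t + sin² t = 1`.
-/

open Real

/-- The quadratic map `q : ℝ¹⁰ → ℝ⁵` (coordinates `x₁,…,x₁₀` of the statement
are `x 0, …, x 9` here). -/
noncomputable def qMap (x : Fin 10 → ℝ) : Fin 5 → ℝ :=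
  ![2 * x 0 * x 1 - x 6 ^ 2 - x 7 ^ 2 + x 8 ^ 2 + x 9 ^ 2,
    √2 * x 4 * x 6 - √2 * x 4 * x 8 + √2 * x 5 * x 7 - √2 * x 5 * x 9
      - 2 * x 1 * x 3,
    -(√2) * x 4 * x 7 - √2 * x 4 * x 9 + √2 * x 5 * x 6 + √2 * x 5 * x 8
      + 2 * x 1 * x 2,
    -(√2) * x 2 * x 6 + √2 * x 2 * x 8 + √2 * x 3 * x 7 + √2 * x 3 * x 9
      - 2 * x 0 * x 5,
    -(√2) * x 2 * x 7 + √2 * x 2 * x 9 - √2 * x 3 * x 6 - √2 * x 3 * x 8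
      + 2 * x 0 * x 4]

/-- The Cartan–Münzner polynomial `F(x) = 2|q(x)|² - |x|⁴`. -/
noncomputable def FCM (x : Fin 10 → ℝ) : ℝ :=
  2 * (∑ i, qMap x i ^ 2) - (∑ i, x i ^ 2) ^ 2

/-- The partial derivative `∂F/∂x_{j+1}` of the polynomial function `F`. -/
noncomputable def pdF (j : Fin 10) (x : Fin 10 → ℝ) : ℝ :=
  fderiv ℝ FCM x (Pi.single j 1)

/-- `ζ(x) = x₉ + i x₁₀`. -/
noncomputable def zetaF (x : Fin 10 → ℝ) : ℂ := (x 8 : ℂ) + Complex.I * (x 9 : ℂ)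

/-- `κ(x)`, the highest weight function of weight `(1,0)`. -/
noncomputable def kappaF (x : Fin 10 → ℝ) : ℂ :=
  ((√2 * x 4 * x 6 - √2 * x 4 * x 8 + √2 * x 5 * x 7 - √2 * x 5 * x 9
      - 2 * x 1 * x 3 : ℝ) : ℂ)
    + Complex.I * ((-(√2) * x 4 * x 7 - √2 * x 4 * x 9 + √2 * x 5 * x 6
      + √2 * x 5 * x 8 + 2 * x 1 * x 2 : ℝ) : ℂ)

/-- `σ(x)`, the highest weight function of weight `(2,0)`. -/
noncomputable def sigmaF (x : Fin 10 → ℝ) : ℂ :=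
  ((-(x 2 ^ 2) + x 3 ^ 2 - 2 * x 6 * x 8 - 2 * x 7 * x 9 : ℝ) : ℂ)
    + Complex.I * ((-2 * x 2 * x 3 - 2 * x 6 * x 9 + 2 * x 7 * x 8 : ℝ) : ℂ)

/-- `ν(x) = (1/4)(∂F/∂x₉ + i ∂F/∂x₁₀)`. -/
noncomputable def nuF (x : Fin 10 → ℝ) : ℂ :=
  (1 / 4 : ℂ) * ((pdF 8 x : ℂ) + Complex.I * (pdF 9 x : ℂ))

/-- `ρ(x) = (1/4)(x₉ + i x₁₀)(∂F/∂x₃ + i ∂F/∂x₄)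
- (1/4)(∂F/∂x₉ + i ∂F/∂x₁₀)(x₃ + i x₄)`. -/
noncomputable def rhoF (x : Fin 10 → ℝ) : ℂ :=
  (1 / 4 : ℂ) * ((x 8 : ℂ) + Complex.I * (x 9 : ℂ))
      * ((pdF 2 x : ℂ) + Complex.I * (pdF 3 x : ℂ))
    - (1 / 4 : ℂ) * ((pdF 8 x : ℂ) + Complex.I * (pdF 9 x : ℂ))
      * ((x 2 : ℂ) + Complex.I * (x 3 : ℂ))

/-- The curve `p_t`. -/
noncomputable def pCurve (t : ℝ) : Fin 10 → ℝ :=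
  ![0, 0, (2 : ℝ) ^ (-(1 / 4 : ℝ)) * Real.cos t, 0,
    -((2 : ℝ) ^ (-(1 / 4 : ℝ))) * Real.sin t, 0,
    (1 / 2) * √(4 - 2 * √2), 0, 0, 0]

/-- The slice of `ℝ¹⁰` on which only the coordinates `x₃, x₅, x₇` may be nonzero. -/
def slicePoint (a b c : ℝ) : Fin 10 → ℝ := ![0, 0, a, 0, b, 0, c, 0, 0, 0]

lemma differentiable_FCM : Differentiable ℝ FCM := by
  unfold FCM qMap
  simp only [Fin.sum_univ_succ, Fin.sum_univ_zero, Matrix.cons_val_zero, Matrix.cons_val_succ]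
  fun_prop

/-- Partial derivatives of `F` may be computed by restriction to coordinate lines. -/
lemma pdF_eq_of_hasDerivAt {j : Fin 10} {x : Fin 10 → ℝ} {d : ℝ}
    (h : HasDerivAt (fun s : ℝ => FCM (x + s • Pi.single j 1)) d 0) : pdF j x = d := by
  have h' : HasLineDerivAt ℝ FCM d x (Pi.single j 1) := h
  rw [pdF, ← (differentiable_FCM x).lineDeriv_eq_fderiv, h'.lineDeriv]

lemma slicePoint_add_eight (a b c s : ℝ) :
    slicePoint a b c + s • Pi.single 8 1 = ![0, 0, a, 0, b, 0, c, 0, s, 0] := by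
  ext i
  fin_cases i <;> simp [slicePoint]

lemma slicePoint_add_nine (a b c s : ℝ) :
    slicePoint a b c + s • Pi.single 9 1 = ![0, 0, a, 0, b, 0, c, 0, 0, s] := by
  ext i
  fin_cases i <;> simp [slicePoint]

lemma FCM_line_eight (a b c s : ℝ) :
    FCM ![0, 0, a, 0, b, 0, c, 0, s, 0]
      = 2 * ((s ^ 2 - c ^ 2) ^ 2 + 2 * (a ^ 2 + b ^ 2) * (s - c) ^ 2)
        - (a ^ 2 + b ^ 2 + c ^ 2 + s ^ 2) ^ 2 := by
  have h2 : √2 ^ 2 = (2 : ℝ) := Real.sq_sqrt (by norm_num)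
  simp [FCM, qMap, Fin.sum_univ_succ]
  linear_combination (2 * (a ^ 2 + b ^ 2) * (s - c) ^ 2) * h2

lemma FCM_line_nine (a b c s : ℝ) :
    FCM ![0, 0, a, 0, b, 0, c, 0, 0, s]
      = 2 * ((s ^ 2 - c ^ 2) ^ 2 + 2 * (a ^ 2 + b ^ 2) * (s ^ 2 + c ^ 2))
        - (a ^ 2 + b ^ 2 + c ^ 2 + s ^ 2) ^ 2 := by
  have h2 : √2 ^ 2 = (2 : ℝ) := Real.sq_sqrt (by norm_num)
  simp [FCM, qMap, Fin.sum_univ_succ]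
  linear_combination (2 * (a ^ 2 + b ^ 2) * (s ^ 2 + c ^ 2)) * h2

lemma pdF_eight_slicePoint (a b c : ℝ) :
    pdF 8 (slicePoint a b c) = -8 * c * (a ^ 2 + b ^ 2) := by
  apply pdF_eq_of_hasDerivAt
  simp only [slicePoint_add_eight, FCM_line_eight]
  have hid := hasDerivAt_id (0 : ℝ)
  refine HasDerivAt.congr_deriv (((((hid.pow 2).sub_const (c ^ 2)).pow 2).add
    (((hid.sub_const c).pow 2).const_mul (2 * (a ^ 2 + b ^ 2)))).const_mul 2 |>.sub
    (((hid.pow 2).const_add (a ^ 2 + b ^ 2 + c ^ 2)).pow 2)) ?_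
  simp
  ring

lemma pdF_nine_slicePoint (a b c : ℝ) : pdF 9 (slicePoint a b c) = 0 := by
  apply pdF_eq_of_hasDerivAt
  simp only [slicePoint_add_nine, FCM_line_nine]
  have hid := hasDerivAt_id (0 : ℝ)
  refine HasDerivAt.congr_deriv (((((hid.pow 2).sub_const (c ^ 2)).pow 2).add
    (((hid.pow 2).add_const (c ^ 2)).const_mul (2 * (a ^ 2 + b ^ 2)))).const_mul 2 |>.sub
    (((hid.pow 2).const_add (a ^ 2 + b ^ 2 + c ^ 2)).pow 2)) ?_
  simp

/-- the values of the highest weight functions `ζ, κ, ν, ρ, σ`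
along the curve `p_t`. -/
theorem stmt13 (t : ℝ) :
    zetaF (pCurve t) = 0 ∧
    kappaF (pCurve t)
      = ((-((2 : ℝ) ^ (-(3 / 4 : ℝ))) * √(4 - 2 * √2) * Real.sin t : ℝ) : ℂ) ∧
    nuF (pCurve t) = ((-((2 : ℝ) ^ (-(1 / 2 : ℝ))) * √(4 - 2 * √2) : ℝ) : ℂ) ∧
    rhoF (pCurve t)
      = (((2 : ℝ) ^ (-(3 / 4 : ℝ)) * √(4 - 2 * √2) * Real.cos t : ℝ) : ℂ) ∧
    sigmaF (pCurve t) = ((-((2 : ℝ) ^ (-(1 / 2 : ℝ))) * Real.cos t ^ 2 : ℝ) : ℂ) := by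
  set r : ℝ := (2 : ℝ) ^ (-(1 / 4 : ℝ)) with hr
  have hrr : r ^ 2 = (2 : ℝ) ^ (-(1 / 2 : ℝ)) := by
    rw [hr, ← Real.rpow_natCast, ← Real.rpow_mul (by norm_num)]
    norm_num
  have hsr : √2 * r = 2 * (2 : ℝ) ^ (-(3 / 4 : ℝ)) := by
    rw [hr, Real.sqrt_eq_rpow, ← Real.rpow_add (by norm_num),
      ← Real.rpow_one_add' (by norm_num) (by norm_num)]
    norm_num
  have hr3 : (2 : ℝ) ^ (-(1 / 2 : ℝ)) * r = (2 : ℝ) ^ (-(3 / 4 : ℝ)) := by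
    rw [hr, ← Real.rpow_add (by norm_num)]
    norm_num
  have hp : pCurve t = slicePoint (r * cos t) (-r * sin t) (1 / 2 * √(4 - 2 * √2)) := rfl
  -- Here `a² + b² = r²`, as `(x₃, x₅)` runs over a circle of radius `r`.
  have h8 : pdF 8 (pCurve t) = -4 * (2 : ℝ) ^ (-(1 / 2 : ℝ)) * √(4 - 2 * √2) := by
    rw [hp, pdF_eight_slicePoint, ← hrr]
    linear_combination (-4 * r ^ 2 * √(4 - 2 * √2)) * Real.sin_sq_add_cos_sq t
  have h9 : pdF 9 (pCurve t) = 0 := by rw [hp, pdF_nine_slicePoint]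
  have hnu : nuF (pCurve t)
      = ((-((2 : ℝ) ^ (-(1 / 2 : ℝ))) * √(4 - 2 * √2) : ℝ) : ℂ) := by
    rw [nuF, h8, h9]
    push_cast
    ring
  refine ⟨?_, ?_, hnu, ?_, ?_⟩
  · simp [hp, zetaF, slicePoint]
  · have h : √2 * (-r * sin t) * (1 / 2 * √(4 - 2 * √2))
        = -((2 : ℝ) ^ (-(3 / 4 : ℝ))) * √(4 - 2 * √2) * sin t := by
      linear_combination (-sin t * (1 / 2 * √(4 - 2 * √2))) * hsr
    rw [← h, hp]
    simp [kappaF, slicePoint]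
  · -- Since `x₉ = x₁₀ = 0` and `x₄ = 0`, `ρ` reduces to `-ν x₃`.
    have h : rhoF (pCurve t) = -(nuF (pCurve t)) * ((r * cos t : ℝ) : ℂ) := by
      rw [rhoF, nuF, h9, h8, hp]
      simp [slicePoint]
    rw [h, hnu, ← hr3]
    push_cast
    ring
  · rw [← hrr, hp]
    simp [sigmaF, slicePoint]
    ring
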